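/- Every Krylov set-valued map 𝒞 : X → 2^𝒫 admits a Markov selection, i.e., a measurable selection x ↦ P_x ∈ 𝒞(x) such that for every s > 0, θ_s P_x(·) = ∫ P_{w(s)}(·) P_x(dw). -/

import Mathlib

open MeasureTheory Set
open scoped NNReal

noncomputable section

/-- The space `Ω = C([0,∞) → X)` with the compact-open topology. -/
abbrev IPath (X : Type*) [TopologicalSpace X] : Type _ := C(ℝ≥0, X)

variable {X : Type*} [TopologicalSpace X]

/-- The shift `θ_s : w(·) ↦ w(s + ·)`. -/
def shift (s : ℝ≥0) (w : IPath X) : IPath X :=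
  w.comp ⟨fun t => s + t, by fun_prop⟩

lemma shift_continuous (s : ℝ≥0) : Continuous (shift (X := X) s) :=
  ContinuousMap.continuous_precomp _

/-- The Borel σ-algebra `ℱ` on the path space. -/
instance : MeasurableSpace (IPath X) := borel _
instance : BorelSpace (IPath X) := ⟨rfl⟩

/-- The push-forward `θ_s P` of a probability measure on path space by the shift. -/
def pshift (s : ℝ≥0) (P : ProbabilityMeasure (IPath X)) :
    ProbabilityMeasure (IPath X) :=
  P.map (f := shift s) (shift_continuous s).measurable.aemeasurable

/-- Convexity of a set of probability measures. -/
def ConvexMeasSet {Ω' : Type*} [MeasurableSpace Ω']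
    (C : Set (ProbabilityMeasure Ω')) : Prop :=
  ∀ P ∈ C, ∀ Q ∈ C, ∀ a b : ℝ≥0, a + b = 1 →
    ∀ R : ProbabilityMeasure Ω',
      (R : Measure Ω') = a • (P : Measure Ω') + b • (Q : Measure Ω') → R ∈ C

/-- `Q f = ∫ f dQ` for a bounded continuous `f` on path space. -/
def intBCF (f : BoundedContinuousFunction (IPath X) ℝ)
    (Q : ProbabilityMeasure (IPath X)) : ℝ :=
  ∫ w, f w ∂(Q : Measure (IPath X))

/-- The support function `h_x[f] = sup {P f : P ∈ 𝒞 x}`. -/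
def hSupp (C : X → Set (ProbabilityMeasure (IPath X))) (x : X)
    (f : BoundedContinuousFunction (IPath X) ℝ) : ℝ :=
  sSup (intBCF f '' C x)

/-- The set `K(P, s, 𝒞) = {Q : Q f ≤ ∫ h_{w(s)}[f] dP, ∀ f ∈ C_b(Ω)}`. -/
def Kset (C : X → Set (ProbabilityMeasure (IPath X)))
    (P : ProbabilityMeasure (IPath X)) (s : ℝ≥0) :
    Set (ProbabilityMeasure (IPath X)) :=
  {Q | ∀ f : BoundedContinuousFunction (IPath X) ℝ,
    intBCF f Q ≤ ∫ w, hSupp C (w s) f ∂(P : Measure (IPath X))}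

/-- The functional `ζ_n(P) = ∫₀^∞ e^{-λ_n t} ∫ φ_n(w(t)) P(dw) dt`. -/
def zetaP (lam : ℝ) (phi : X → ℝ) (P : ProbabilityMeasure (IPath X)) : ℝ :=
  ∫ t in Ioi (0 : ℝ), Real.exp (-lam * t) *
    ∫ w, phi (w (Real.toNNReal t)) ∂(P : Measure (IPath X))

/-- The truncated functional `ζ_n^s(P) = ∫₀^s e^{-λ_n t} ∫ φ_n(w(t)) P(dw) dt`. -/
def zetaPtrunc (lam : ℝ) (phi : X → ℝ) (s : ℝ≥0)
    (P : ProbabilityMeasure (IPath X)) : ℝ :=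
  ∫ t in Ioc (0 : ℝ) (s : ℝ), Real.exp (-lam * t) *
    ∫ w, phi (w (Real.toNNReal t)) ∂(P : Measure (IPath X))

/-- The set `Γ[P, x, s](𝒞) = {Q ∈ 𝒞(x) : θ_s Q ∈ K(P, s, 𝒞), ζ_n^s(Q) ≥ ζ_n^s(P) ∀n}`. -/
def GammaSet (C : X → Set (ProbabilityMeasure (IPath X)))
    (lam : ℕ → ℝ) (phi : ℕ → X → ℝ)
    (P : ProbabilityMeasure (IPath X)) (x : X) (s : ℝ≥0) :
    Set (ProbabilityMeasure (IPath X)) :=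
  {Q | Q ∈ C x ∧ pshift s Q ∈ Kset C P s ∧
    ∀ n, zetaPtrunc (lam n) (phi n) s P ≤ zetaPtrunc (lam n) (phi n) s Q}

/-- A **Krylov set-valued map**: nonempty compact convex values (C1), measurable (C2),
`P(Ω_x) = 1` for `P ∈ 𝒞(x)` (C3), `θ_s P ∈ K(P, s, 𝒞)` (KP1), and
`θ_s(Γ[P, x, s](𝒞)) = K(P, s, 𝒞)` (KP2), for all `x`, `P ∈ 𝒞(x)`, `s > 0`. -/
def IsKrylov {X : Type*} [TopologicalSpace X] [MeasurableSpace X]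
    (C : X → Set (ProbabilityMeasure (IPath X)))
    (lam : ℕ → ℝ) (phi : ℕ → X → ℝ) : Prop :=
  (∀ x, (C x).Nonempty ∧ IsCompact (C x) ∧ ConvexMeasSet (C x)) ∧
  (∀ K : Set (ProbabilityMeasure (IPath X)), IsClosed K →
    MeasurableSet {x | (C x ∩ K).Nonempty}) ∧
  (∀ x, ∀ P ∈ C x, (P : Measure (IPath X)) {w : IPath X | w 0 = x} = 1) ∧
  (∀ x, ∀ P ∈ C x, ∀ s : ℝ≥0, 0 < s → pshift s P ∈ Kset C P s) ∧
  (∀ x, ∀ P ∈ C x, ∀ s : ℝ≥0, 0 < s →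
    pshift s '' GammaSet C lam phi P x s = Kset C P s)

/-- The set `V_η[K]` of maximizers of `η` over `K`. -/
def Vmax {α : Type*} (η : α → ℝ) (K : Set α) : Set α :=
  {P ∈ K | ∀ Q ∈ K, η Q ≤ η P}

/-- The properties of the data `(λ_n, φ_n)`: an enumeration of `Λ × Φ` where
`Λ ⊆ (0,∞)` is dense in `(0,∞)` and `Φ` is a countable family of bounded continuous
functions on `X` that strongly separates points and is closed under multiplication. -/
def GoodData {X : Type*} [TopologicalSpace X] (lam : ℕ → ℝ) (phi : ℕ → X → ℝ) : Prop :=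
  (∀ n, 0 < lam n) ∧
  (Ioi (0 : ℝ) ⊆ closure (range lam)) ∧
  (∀ n, Continuous (phi n)) ∧
  (∀ n, ∃ M, ∀ y, |phi n y| ≤ M) ∧
  (∀ x : X, ∀ V ∈ nhds x, ∃ n, ∃ ε > 0, ∀ y ∉ V, ε ≤ |phi n x - phi n y|) ∧
  (∀ m n, ∃ k, phi k = fun y => phi m y * phi n y) ∧
  (∀ m n, ∃ k, lam k = lam m ∧ phi k = phi n)

/-!
Replacing every `𝒞(x)` by its set of maximizers of `ζ_n` preserves the Krylov property. The point
is that maximization commutes with `𝒞 ↦ K(P, s, 𝒞)`: the support function of the set of maximizers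
of `F` over `𝒞(x)` at `f` is the limit of `h_x[f + nF] - n h_x[F]`, and this limit may be taken
under the integral in the definition of `K(P, s, 𝒞)`. Maximizing `ζ_0, ζ_1, …` successively and
intersecting leaves nonempty sets `𝒞_∞(x)` satisfying (KP1), on which every `ζ_n` is constant.
By uniqueness for the Laplace transform all laws in `𝒞_∞(x)` have the same one-dimensional
marginals, and (KP1), read at the earliest of finitely many times, propagates this to all
finite-dimensional marginals. Hence `𝒞_∞(x)` is a single law `P_x`, depending measurably on `x`, and
(KP1) for singletons is the Markov property.
-/

open Filter Topology ProbabilityTheory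
open scoped BoundedContinuousFunction

/-! ### Families of functions that determine a measure -/

section Determining

variable {E : Type*} [TopologicalSpace E]

lemma integral_eq_of_mem_adjoin [MeasurableSpace E] [OpensMeasurableSpace E]
    {S : Submonoid (E →ᵇ ℝ)} {μ ν : Measure E} [IsFiniteMeasure μ] [IsFiniteMeasure ν]
    (h : ∀ f ∈ S, ∫ x, f x ∂μ = ∫ x, f x ∂ν) {g : E →ᵇ ℝ}
    (hg : g ∈ Algebra.adjoin ℝ (S : Set (E →ᵇ ℝ))) : ∫ x, g x ∂μ = ∫ x, g x ∂ν := by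
  rw [← Subalgebra.mem_toSubmodule, Algebra.adjoin_eq_span, Submonoid.closure_eq] at hg
  induction hg using Submodule.span_induction with
  | mem f hf => exact h f hf
  | zero => simp
  | add f g _ _ hf hg =>
    simp only [BoundedContinuousFunction.coe_add, Pi.add_apply]
    rw [integral_add (f.integrable μ) (g.integrable μ),
      integral_add (f.integrable ν) (g.integrable ν), hf, hg]
  | smul c f _ hf =>
    simp only [BoundedContinuousFunction.coe_smul, smul_eq_mul, integral_const_mul, hf]

theorem measure_ext_of_submonoid_separating [PolishSpace E] [MeasurableSpace E] [BorelSpace E]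
    {S : Submonoid (E →ᵇ ℝ)} (hS : Pairwise fun x y => ∃ f ∈ S, f x ≠ f y)
    {μ ν : Measure E} [IsFiniteMeasure μ] [IsFiniteMeasure ν]
    (h : ∀ f ∈ S, ∫ x, f x ∂μ = ∫ x, f x ∂ν) : μ = ν := by
  let A : StarSubalgebra ℝ (E →ᵇ ℝ) :=
    { Algebra.adjoin ℝ (S : Set (E →ᵇ ℝ)) with star_mem' := id }
  refine ext_of_forall_mem_subalgebra_integral_eq_of_polish (𝕜 := ℝ) (A := A) ?_
    fun g hg => integral_eq_of_mem_adjoin h hg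
  intro x y hxy
  obtain ⟨f, hfS, hf⟩ := hS hxy
  exact ⟨f, ⟨f.toContinuousMap, ⟨f, Algebra.subset_adjoin hfS, rfl⟩, rfl⟩, hf⟩

variable (E) in
lemma exists_seq_bcf_separating [TopologicalSpace.MetrizableSpace E]
    [TopologicalSpace.SeparableSpace E] :
    ∃ F : ℕ → E →ᵇ ℝ, Pairwise fun x y => ∃ n, F n x ≠ F n y := by
  let _ := TopologicalSpace.metrizableSpaceMetric E
  rcases isEmpty_or_nonempty E with _ | _
  · exact ⟨0, fun x => isEmptyElim x⟩
  let u := TopologicalSpace.denseSeq E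
  refine ⟨fun n => .ofNormedAddCommGroup (fun x => min (dist x (u n)) 1) (by fun_prop) 1
    fun x => ?_, fun x y hxy => ?_⟩
  · rw [Real.norm_eq_abs, abs_of_nonneg (le_min dist_nonneg zero_le_one)]
    exact min_le_right _ _
  · have hpos : 0 < min (dist x y / 2) 1 := lt_min (half_pos (dist_pos.2 hxy)) one_pos
    obtain ⟨n, hn⟩ := (TopologicalSpace.denseRange_denseSeq E).exists_dist_lt x hpos
    obtain ⟨hnear, hlt_one⟩ := lt_min_iff.1 hn
    refine ⟨n, ne_of_lt ?_⟩
    have hfar : dist x (u n) < dist y (u n) := by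
      linarith [dist_triangle_right x y (u n)]
    exact (min_le_left _ _).trans_lt (lt_min hfar hlt_one)

variable (E) in
theorem exists_seq_bcf_integral_separating [PolishSpace E] [MeasurableSpace E] [BorelSpace E] :
    ∃ F : ℕ → E →ᵇ ℝ, ∀ P Q : ProbabilityMeasure E,
      (∀ n, ∫ x, F n x ∂(P : Measure E) = ∫ x, F n x ∂(Q : Measure E)) → P = Q := by
  obtain ⟨G, hG⟩ := exists_seq_bcf_separating E
  let S := Submonoid.closure (range G)
  have hcount : (S : Set (E →ᵇ ℝ)).Countable := by
    have : Countable (FreeMonoid ℕ) := inferInstanceAs (Countable (List ℕ))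
    have hrange : (S : Set (E →ᵇ ℝ)) = range (FreeMonoid.lift G) := by
      rw [← MonoidHom.coe_mrange, FreeMonoid.mrange_lift]
    exact hrange ▸ countable_range _
  obtain ⟨F, hF⟩ := hcount.exists_eq_range ⟨1, S.one_mem⟩
  have hsep : Pairwise fun x y => ∃ f ∈ S, f x ≠ f y := fun x y hxy =>
    let ⟨n, hn⟩ := hG hxy
    ⟨G n, Submonoid.subset_closure (mem_range_self n), hn⟩
  refine ⟨F, fun P Q h => Subtype.ext <| measure_ext_of_submonoid_separating
    (μ := (P : Measure E)) (ν := (Q : Measure E)) hsep fun f hf => ?_⟩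
  obtain ⟨n, rfl⟩ : f ∈ range F := hF ▸ hf
  exact h n

theorem ae_eq_zero_of_forall_integral_mul_eq_zero [PolishSpace E] [MeasurableSpace E]
    [BorelSpace E] {S : Submonoid (E →ᵇ ℝ)} (hS : Pairwise fun x y => ∃ f ∈ S, f x ≠ f y)
    {μ : Measure E} {g : E → ℝ} (hg : Integrable g μ)
    (h : ∀ f ∈ S, ∫ x, g x * f x ∂μ = 0) : g =ᵐ[μ] 0 := by
  have hg_neg : Integrable (fun x => -g x) μ := hg.neg
  have hpos : IsFiniteMeasure (μ.withDensity fun x => .ofReal (g x)) :=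
    isFiniteMeasure_withDensity_ofReal hg.2
  have hneg : IsFiniteMeasure (μ.withDensity fun x => .ofReal (-g x)) :=
    isFiniteMeasure_withDensity_ofReal hg_neg.2
  have integral_withDensity_ofReal {u : E → ℝ} (hu : Integrable u μ) (f : E →ᵇ ℝ) :
      ∫ x, f x ∂(μ.withDensity fun x => .ofReal (u x)) = ∫ x, max (u x) 0 * f x ∂μ := by
    rw [integral_withDensity_eq_integral_toReal_smul₀ hu.1.aemeasurable.ennreal_ofReal
      (ae_of_all _ fun _ => ENNReal.ofReal_lt_top)]
    simp only [ENNReal.toReal_ofReal', smul_eq_mul]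
  have integrable_posPart_mul {u : E → ℝ} (hu : Integrable u μ) (f : E →ᵇ ℝ) :
      Integrable (fun x => max (u x) 0 * f x) μ :=
    hu.pos_part.mul_bdd f.continuous.aestronglyMeasurable (ae_of_all _ f.norm_coe_le_norm)
  have parts_eq : (μ.withDensity fun x => .ofReal (g x)) =
      μ.withDensity fun x => .ofReal (-g x) := by
    refine measure_ext_of_submonoid_separating hS fun f hf => ?_
    rw [integral_withDensity_ofReal hg, integral_withDensity_ofReal hg_neg, ← sub_eq_zero,
      ← integral_sub (integrable_posPart_mul hg f) (integrable_posPart_mul hg_neg f)]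
    simpa only [← sub_mul, max_zero_sub_max_neg_zero_eq_self] using h f hf
  rw [withDensity_eq_iff hg.1.aemeasurable.ennreal_ofReal
    hg_neg.1.aemeasurable.ennreal_ofReal hg.lintegral_lt_top.ne] at parts_eq
  filter_upwards [parts_eq] with x hx
  have hmax : max (g x) 0 = max (-g x) 0 := by
    simpa only [ENNReal.toReal_ofReal'] using congrArg ENNReal.toReal hx
  change g x = 0
  simpa only [hmax, sub_self, eq_comm] using max_zero_sub_max_neg_zero_eq_self (g x)

end Determining

/-! ### Uniqueness for the Laplace transform -/

section Laplace

variable {g : ℝ → ℝ} {M : ℝ}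

/-- The Laplace transform `l ↦ ∫₀^∞ e^{-lt} g(t) dt` of a function on `(0, ∞)`. Functions of time
are defined on all of `ℝ`, as in `zetaP`; their values on `(-∞, 0]` play no role. -/
def laplace (g : ℝ → ℝ) (l : ℝ) : ℝ := ∫ t in Ioi (0 : ℝ), Real.exp (-l * t) * g t

lemma integrableOn_exp_neg_mul_of_bounded (hg : Measurable g) (hM : ∀ t, |g t| ≤ M) {l : ℝ}
    (hl : 0 < l) : IntegrableOn (fun t => Real.exp (-l * t) * g t) (Ioi 0) :=
  (exp_neg_integrableOn_Ioi 0 hl).mul_bdd hg.aestronglyMeasurable (ae_of_all _ hM)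

lemma laplace_eq_setIntegral_add (hg : Measurable g) (hM : ∀ t, |g t| ≤ M) {l : ℝ} (hl : 0 < l)
    {s : ℝ} (hs : 0 ≤ s) :
    laplace g l = (∫ t in Ioc 0 s, Real.exp (-l * t) * g t) +
      Real.exp (-l * s) * laplace (fun t => g (t + s)) l := by
  have hint := integrableOn_exp_neg_mul_of_bounded hg hM hl
  have htail : ∫ t in Ioi s, Real.exp (-l * t) * g t =
      Real.exp (-l * s) * laplace (fun t => g (t + s)) l := by
    rw [laplace, ← integral_const_mul,
      ← (measurePreserving_add_right volume s).setIntegral_preimage_emb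
        (measurableEmbedding_addRight s), preimage_add_const_Ioi, sub_self]
    refine integral_congr_ae (ae_of_all _ fun t => ?_)
    dsimp only
    rw [← mul_assoc, ← Real.exp_add]
    ring_nf
  rw [← htail, laplace, ← Ioc_union_Ioi_eq_Ioi hs, setIntegral_union (Ioc_disjoint_Ioi le_rfl)
    measurableSet_Ioi (hint.mono_set Ioc_subset_Ioi_self) (hint.mono_set (Ioi_subset_Ioi hs))]

lemma continuousOn_laplace (hg : Measurable g) (hM : ∀ t, |g t| ≤ M) :
    ContinuousOn (laplace g) (Ioi 0) := by
  intro l (hl : 0 < l)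
  refine ContinuousAt.continuousWithinAt <|
    continuousAt_of_dominated (bound := fun t => Real.exp (-(l / 2) * t) * M) ?_ ?_ ?_ ?_
  · exact .of_forall fun l' =>
      ((by fun_prop : Measurable fun t => Real.exp (-l' * t)).mul hg).aestronglyMeasurable
  · filter_upwards [lt_mem_nhds (half_lt_self hl)] with l' hl'
    filter_upwards [ae_restrict_mem measurableSet_Ioi] with t (ht : 0 < t)
    rw [norm_mul, Real.norm_eq_abs, Real.abs_exp]
    gcongr
    exact hM t
  · exact (exp_neg_integrableOn_Ioi 0 (half_pos hl)).mul_const M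
  · exact ae_of_all _ fun t => by fun_prop

/-- The function `t ↦ e^{-t}` on `(0, ∞)`, whose powers separate points and turn integrals into
values of the Laplace transform at integers. -/
def expNegBCF : Ioi (0 : ℝ) →ᵇ ℝ :=
  .ofNormedAddCommGroup (fun t => Real.exp (-(t : ℝ))) (by fun_prop) 1 fun t => by
    rw [Real.norm_eq_abs, Real.abs_exp]
    exact Real.exp_le_one_iff.2 (neg_nonpos.2 t.2.le)

lemma powers_expNegBCF_separating :
    Pairwise fun x y => ∃ f ∈ Submonoid.powers expNegBCF, f x ≠ f y := fun _ _ hxy =>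
  ⟨expNegBCF, Submonoid.mem_powers _, fun h =>
    hxy <| Subtype.ext <| neg_injective <| Real.exp_injective h⟩

lemma integral_expNegBCF_pow (g : ℝ → ℝ) (k : ℕ) :
    ∫ t : Ioi (0 : ℝ), Real.exp (-1 * t) * g t * (expNegBCF ^ k) t ∂(volume.comap Subtype.val) =
      laplace g (k + 1) := by
  rw [laplace, ← integral_subtype_comap measurableSet_Ioi]
  refine integral_congr_ae (ae_of_all _ fun t => ?_)
  dsimp only
  have hpow : (expNegBCF ^ k) t = Real.exp (-(k * t)) := by
    simp [expNegBCF, ← Real.exp_nat_mul]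
  rw [hpow, mul_right_comm, ← Real.exp_add]
  ring_nf

theorem eqOn_zero_of_laplace_eqOn_zero (hg : Continuous g) (hM : ∀ t, |g t| ≤ M) {Λ : Set ℝ}
    (hpos : Λ ⊆ Ioi 0) (hdense : Ioi 0 ⊆ closure Λ) (h : EqOn (laplace g) 0 Λ) :
    EqOn g 0 (Ioi 0) := by
  have laplace_eq_zero : EqOn (laplace g) 0 (Ioi 0) :=
    h.of_subset_closure (continuousOn_laplace hg.measurable hM) continuousOn_const hpos hdense
  have hint : IntegrableOn (fun t => Real.exp (-1 * t) * g t) (Ioi 0) :=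
    integrableOn_exp_neg_mul_of_bounded hg.measurable hM one_pos
  have : PolishSpace (Ioi (0 : ℝ)) := isOpen_Ioi.polishSpace
  have hae : (fun t : Ioi (0 : ℝ) => Real.exp (-1 * t) * g t) =ᵐ[volume.comap Subtype.val] 0 := by
    refine ae_eq_zero_of_forall_integral_mul_eq_zero powers_expNegBCF_separating
      ((integrableOn_iff_comap_subtypeVal measurableSet_Ioi).1 hint) ?_
    rintro _ ⟨k, rfl⟩
    exact (integral_expNegBCF_pow g k).trans (laplace_eq_zero (by positivity : (0 : ℝ) < k + 1))
  have hae' : (fun t => Real.exp (-1 * t) * g t) =ᵐ[volume.restrict (Ioi 0)] 0 :=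
    (ae_restrict_iff_subtype measurableSet_Ioi).2 hae
  intro t ht
  have := Measure.eqOn_open_of_ae_eq hae' isOpen_Ioi (by fun_prop) (by fun_prop) ht
  exact (mul_eq_zero.1 this).resolve_left (Real.exp_ne_zero _)

theorem eqOn_of_laplace_eqOn {f : ℝ → ℝ} (hf : Continuous f) (hg : Continuous g)
    (hfM : ∀ t, |f t| ≤ M) (hgM : ∀ t, |g t| ≤ M) {Λ : Set ℝ} (hpos : Λ ⊆ Ioi 0)
    (hdense : Ioi 0 ⊆ closure Λ) (h : EqOn (laplace f) (laplace g) Λ) : EqOn f g (Ioi 0) := by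
  have hsub : EqOn (fun t => f t - g t) 0 (Ioi 0) := by
    refine eqOn_zero_of_laplace_eqOn_zero (hf.sub hg) (M := M + M)
      (fun t => (abs_sub _ _).trans (add_le_add (hfM t) (hgM t))) hpos hdense fun l hl => ?_
    simp only [laplace, mul_sub]
    rw [integral_sub (integrableOn_exp_neg_mul_of_bounded hf.measurable hfM (hpos hl))
      (integrableOn_exp_neg_mul_of_bounded hg.measurable hgM (hpos hl))]
    exact sub_eq_zero.2 (h hl)
  exact fun t ht => sub_eq_zero.1 (hsub ht)

end Laplace

/-! ### Maximizers on compact sets -/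

section Maximizers

variable {α : Type*} {K : Set α} {η f F : α → ℝ}

lemma mem_Vmax_iff (hb : BddAbove (η '' K)) {a : α} :
    a ∈ Vmax η K ↔ a ∈ K ∧ η a = sSup (η '' K) := by
  constructor
  · rintro ⟨ha, hmax⟩
    exact ⟨ha, (IsGreatest.csSup_eq ⟨mem_image_of_mem η ha, forall_mem_image.2 hmax⟩).symm⟩
  · rintro ⟨ha, hη⟩
    exact ⟨ha, fun b hbK => hη ▸ le_csSup hb (mem_image_of_mem η hbK)⟩

lemma Vmax_subset : Vmax η K ⊆ K := sep_subset _ _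

/-- The set obtained from `K` by maximizing `η 0, …, η (n - 1)` one after the other. -/
def iterVmax (η : ℕ → α → ℝ) (K : Set α) : ℕ → Set α
  | 0 => K
  | n + 1 => Vmax (η n) (iterVmax η K n)

/-- The lexicographic maximizers on `K` of a sequence of functions. -/
def lexVmax (η : ℕ → α → ℝ) (K : Set α) : Set α := ⋂ n, iterVmax η K n

lemma antitone_iterVmax (η : ℕ → α → ℝ) (K : Set α) : Antitone (iterVmax η K) :=
  antitone_nat_of_succ_le fun _ => Vmax_subset

lemma lexVmax_subset {η : ℕ → α → ℝ} : lexVmax η K ⊆ K := iInter_subset (iterVmax η K) 0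

lemma eq_of_mem_lexVmax {η : ℕ → α → ℝ} {a b : α} (ha : a ∈ lexVmax η K)
    (hb : b ∈ lexVmax η K) (n : ℕ) : η n a = η n b := by
  obtain ⟨ha_mem, ha_max⟩ := mem_iInter.1 ha (n + 1)
  obtain ⟨hb_mem, hb_max⟩ := mem_iInter.1 hb (n + 1)
  exact le_antisymm (hb_max a ha_mem) (ha_max b hb_mem)

variable [TopologicalSpace α]

lemma isCompact_Vmax (hK : IsCompact K) (hη : Continuous η) : IsCompact (Vmax η K) := by
  have hinter : Vmax η K = K ∩ η ⁻¹' {sSup (η '' K)} := by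
    ext a
    exact mem_Vmax_iff (hK.bddAbove_image hη.continuousOn)
  rw [hinter]
  exact hK.inter_right (isClosed_singleton.preimage hη)

lemma Vmax_nonempty (hK : IsCompact K) (hne : K.Nonempty) (hη : Continuous η) :
    (Vmax η K).Nonempty :=
  let ⟨a, ha, hmax⟩ := hK.exists_isMaxOn hne hη.continuousOn
  ⟨a, ha, fun _ hb => hmax hb⟩

lemma sSup_image_Vmax_le (hK : IsCompact K) (hne : K.Nonempty) (hf : Continuous f)
    (hF : Continuous F) (n : ℕ) :
    sSup (f '' Vmax F K) ≤ sSup ((fun a => f a + n * F a) '' K) - n * sSup (F '' K) := by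
  obtain ⟨a, ha, hfa⟩ :=
    (isCompact_Vmax hK hF).exists_sSup_image_eq (Vmax_nonempty hK hne hF) hf.continuousOn
  obtain ⟨haK, hFa⟩ := (mem_Vmax_iff (hK.bddAbove_image hF.continuousOn)).1 ha
  have hle : f a + n * F a ≤ sSup ((fun a => f a + n * F a) '' K) :=
    le_csSup (hK.bddAbove_image (by fun_prop)) (mem_image_of_mem _ haK)
  rw [hfa, ← hFa]
  linarith

lemma exists_nat_forall_sub_mul_lt (hK : IsCompact K) (hf : Continuous f) (hF : Continuous F)
    {c : ℝ} (hc : ∀ a ∈ Vmax F K, f a < c) :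
    ∃ N : ℕ, ∀ a ∈ K, f a - N * |sSup (F '' K) - F a| < c := by
  set M := sSup (F '' K)
  let U (n : ℕ) : Set α := {a | f a - n * |M - F a| < c}
  have hopen (n : ℕ) : IsOpen (U n) := isOpen_lt (by fun_prop) continuous_const
  have hmono : Monotone U := fun m n hmn a (ha : f a - m * |M - F a| < c) =>
    lt_of_le_of_lt (by gcongr) ha
  have hcover : K ⊆ ⋃ n, U n := fun a haK => by
    rw [mem_iUnion]
    rcases eq_or_ne (F a) M with hFa | hFa
    · have hfa := hc a ((mem_Vmax_iff (hK.bddAbove_image hF.continuousOn)).2 ⟨haK, hFa⟩)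
      exact ⟨0, by simpa [U] using hfa⟩
    · have hpos : 0 < |M - F a| := abs_pos.2 (sub_ne_zero.2 hFa.symm)
      obtain ⟨n, hn⟩ := exists_nat_gt ((f a - c) / |M - F a|)
      rw [div_lt_iff₀ hpos] at hn
      exact ⟨n, show f a - n * |M - F a| < c by linarith⟩
  exact hK.elim_directed_cover U hopen hcover hmono.directed_le

-- A large multiple of `F` forces the maximizers of `f + nF` towards those of `F`.
theorem tendsto_sSup_image_add_mul (hK : IsCompact K) (hne : K.Nonempty) (hf : Continuous f)
    (hF : Continuous F) :
    Tendsto (fun n : ℕ => sSup ((fun a => f a + n * F a) '' K) - n * sSup (F '' K)) atTop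
      (𝓝 (sSup (f '' Vmax F K))) := by
  refine tendsto_order.2 ⟨fun c hc => .of_forall fun n =>
    hc.trans_le (sSup_image_Vmax_le hK hne hf hF n), fun c hc => ?_⟩
  have hVmax : ∀ a ∈ Vmax F K, f a < c := fun a ha => lt_of_le_of_lt
    (le_csSup ((isCompact_Vmax hK hF).bddAbove_image hf.continuousOn) (mem_image_of_mem f ha)) hc
  obtain ⟨N, hN⟩ := exists_nat_forall_sub_mul_lt hK hf hF hVmax
  filter_upwards [eventually_ge_atTop N] with n hn
  obtain ⟨a, haK, hmax⟩ := hK.exists_sSup_image_eq hne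
    (by fun_prop : Continuous fun a => f a + n * F a).continuousOn
  have hFa : 0 ≤ sSup (F '' K) - F a :=
    sub_nonneg.2 (le_csSup (hK.bddAbove_image hF.continuousOn) (mem_image_of_mem F haK))
  calc sSup ((fun a => f a + n * F a) '' K) - n * sSup (F '' K)
      = f a - n * (sSup (F '' K) - F a) := by rw [hmax]; ring
    _ ≤ f a - N * (sSup (F '' K) - F a) := by gcongr
    _ < c := by simpa only [abs_of_nonneg hFa] using hN a haK

lemma sSup_image_add_mul_sub_le (hK : IsCompact K) (hne : K.Nonempty) (hf : Continuous f)
    (hF : Continuous F) (n : ℕ) :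
    sSup ((fun a => f a + n * F a) '' K) - n * sSup (F '' K) ≤ sSup (f '' K) := by
  obtain ⟨a, haK, hmax⟩ := hK.exists_sSup_image_eq hne
    (by fun_prop : Continuous fun a => f a + n * F a).continuousOn
  have hfa := le_csSup (hK.bddAbove_image hf.continuousOn) (mem_image_of_mem f haK)
  have hFa := le_csSup (hK.bddAbove_image hF.continuousOn) (mem_image_of_mem F haK)
  rw [hmax]
  linarith [mul_le_mul_of_nonneg_left hFa n.cast_nonneg]

theorem tendsto_sSup_image_iInter [T2Space α] {K : ℕ → Set α} (hanti : Antitone K)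
    (hK : ∀ n, IsCompact (K n)) (hne : ∀ n, (K n).Nonempty) (hf : Continuous f) :
    Tendsto (fun n => sSup (f '' K n)) atTop (𝓝 (sSup (f '' ⋂ n, K n))) := by
  have hbdd (n : ℕ) : BddAbove (f '' K n) := (hK n).bddAbove_image hf.continuousOn
  have hlim_ne : (⋂ n, K n).Nonempty :=
    IsCompact.nonempty_iInter_of_sequence_nonempty_isCompact_isClosed K
      (fun n => hanti n.le_succ) hne (hK 0) fun n => (hK n).isClosed
  refine tendsto_order.2 ⟨fun c hc => .of_forall fun n => hc.trans_le <|
    csSup_le_csSup (hbdd n) (hlim_ne.image f) (image_mono (iInter_subset K n)), fun c hc => ?_⟩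
  have hnhds : ∀ a ∈ ⋂ n, K n, f ⁻¹' Iio c ∈ 𝓝 a := fun a ha =>
    (isOpen_Iio.preimage hf).mem_nhds <| lt_of_le_of_lt
      (le_csSup ((hbdd 0).mono (image_mono (iInter_subset K 0))) (mem_image_of_mem f ha)) hc
  obtain ⟨N, hN⟩ := exists_subset_nhds_of_isCompact hanti.directed_ge hK hnhds
  filter_upwards [eventually_ge_atTop N] with n hn
  obtain ⟨a, ha, hmax⟩ := (hK n).exists_sSup_image_eq (hne n) hf.continuousOn
  exact hmax ▸ hN (hanti hn ha)

end Maximizers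

/-! ### Measurable correspondences with compact values -/

section Correspondence

variable {Y α : Type*} [MeasurableSpace Y] [TopologicalSpace α]

/-- A measurable correspondence with nonempty compact values: the measurability is that of the
lower inverse images of closed sets, as in conditions (C1) and (C2) on a Krylov map. -/
structure IsCompactCorrespondence (C : Y → Set α) : Prop where
  nonempty : ∀ y, (C y).Nonempty
  isCompact : ∀ y, IsCompact (C y)
  measurableSet_inter_nonempty : ∀ K, IsClosed K → MeasurableSet {y | (C y ∩ K).Nonempty}

namespace IsCompactCorrespondence

variable {C : Y → Set α} {η : α → ℝ}

lemma measurableSet_inter_nonempty_and_le (hC : IsCompactCorrespondence C) (hη : Continuous η)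
    {K : Set α} (hK : IsClosed K) (c : ℝ) :
    MeasurableSet {y | (C y ∩ K).Nonempty ∧ c ≤ sSup (η '' (C y ∩ K))} := by
  convert hC.measurableSet_inter_nonempty _ (hK.inter ((isClosed_Ici (a := c)).preimage hη)) using 1
  ext y
  have hcompact := (hC.isCompact y).inter_right hK
  constructor
  · rintro ⟨hne, hle⟩
    obtain ⟨a, ⟨haC, haK⟩, hmax⟩ := hcompact.exists_sSup_image_eq hne hη.continuousOn
    exact ⟨a, haC, haK, hle.trans_eq hmax⟩
  · rintro ⟨a, haC, haK, ha : c ≤ η a⟩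
    exact ⟨⟨a, haC, haK⟩, ha.trans <|
      le_csSup (hcompact.bddAbove_image hη.continuousOn) (mem_image_of_mem η ⟨haC, haK⟩)⟩

lemma measurable_sSup_image_inter (hC : IsCompactCorrespondence C) (hη : Continuous η)
    {K : Set α} (hK : IsClosed K) : Measurable fun y => sSup (η '' (C y ∩ K)) := by
  refine measurable_of_Ici fun c => ?_
  -- The supremum over the empty set is `0`.
  have hpreimage : (fun y => sSup (η '' (C y ∩ K))) ⁻¹' Ici c =
      {y | (C y ∩ K).Nonempty ∧ c ≤ sSup (η '' (C y ∩ K))} ∪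
        ({y | (C y ∩ K).Nonempty}ᶜ ∩ {_y | c ≤ 0}) := by
    ext y
    rcases (C y ∩ K).eq_empty_or_nonempty with h | h <;> simp [h]
  rw [hpreimage]
  exact (hC.measurableSet_inter_nonempty_and_le hη hK c).union <|
    (hC.measurableSet_inter_nonempty K hK).compl.inter (.const _)

lemma measurable_sSup_image (hC : IsCompactCorrespondence C) (hη : Continuous η) :
    Measurable fun y => sSup (η '' C y) := by
  simpa only [inter_univ] using hC.measurable_sSup_image_inter hη isClosed_univ

protected theorem Vmax (hC : IsCompactCorrespondence C) (hη : Continuous η) :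
    IsCompactCorrespondence fun y => Vmax η (C y) where
  nonempty y := Vmax_nonempty (hC.isCompact y) (hC.nonempty y) hη
  isCompact y := isCompact_Vmax (hC.isCompact y) hη
  measurableSet_inter_nonempty K hK := by
    convert (hC.measurableSet_inter_nonempty K hK).inter (measurableSet_le
      (hC.measurable_sSup_image hη) (hC.measurable_sSup_image_inter hη hK)) using 1
    ext y
    have hbdd := (hC.isCompact y).bddAbove_image hη.continuousOn
    constructor
    · rintro ⟨a, ha, haK⟩
      obtain ⟨haC, hmax⟩ := (mem_Vmax_iff hbdd).1 ha
      refine ⟨⟨a, haC, haK⟩, hmax.symm.trans_le (le_csSup ?_ (mem_image_of_mem η ⟨haC, haK⟩))⟩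
      exact hbdd.mono (image_mono inter_subset_left)
    · rintro ⟨hne, hle : sSup (η '' C y) ≤ sSup (η '' (C y ∩ K))⟩
      obtain ⟨a, ⟨haC, haK⟩, hmax⟩ :=
        ((hC.isCompact y).inter_right hK).exists_sSup_image_eq hne hη.continuousOn
      refine ⟨a, (mem_Vmax_iff hbdd).2 ⟨haC, le_antisymm ?_ (hmax ▸ hle)⟩, haK⟩
      exact le_csSup hbdd (mem_image_of_mem η haC)

protected theorem iInter [T2Space α] {C : ℕ → Y → Set α} (hC : ∀ n, IsCompactCorrespondence (C n))
    (hanti : ∀ y, Antitone fun n => C n y) : IsCompactCorrespondence fun y => ⋂ n, C n y := by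
  have inter_nonempty_iff (y : Y) {K : Set α} (hK : IsClosed K) :
      ((⋂ n, C n y) ∩ K).Nonempty ↔ ∀ n, (C n y ∩ K).Nonempty := by
    refine ⟨fun h n => h.mono (inter_subset_inter_left K (iInter_subset _ n)), fun h => ?_⟩
    rw [iInter_inter]
    exact IsCompact.nonempty_iInter_of_sequence_nonempty_isCompact_isClosed _
      (fun n => inter_subset_inter_left K (hanti y n.le_succ)) h
      (((hC 0).isCompact y).inter_right hK) fun n => ((hC n).isCompact y).isClosed.inter hK
  refine ⟨fun y => ?_, fun y => ?_, fun K hK => ?_⟩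
  · simpa only [inter_univ, (hC _).nonempty, implies_true, iff_true] using
      inter_nonempty_iff y isClosed_univ
  · exact ((hC 0).isCompact y).of_isClosed_subset
      (isClosed_iInter fun n => ((hC n).isCompact y).isClosed) (iInter_subset _ 0)
  · simp only [inter_nonempty_iff _ hK, ofPred_forall]
    exact .iInter fun n => (hC n).measurableSet_inter_nonempty K hK

protected lemma iterVmax (hC : IsCompactCorrespondence C) {η : ℕ → α → ℝ}
    (hη : ∀ n, Continuous (η n)) : ∀ n, IsCompactCorrespondence fun y => iterVmax η (C y) n
  | 0 => hC
  | n + 1 => (hC.iterVmax hη n).Vmax (hη n)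

protected theorem lexVmax [T2Space α] (hC : IsCompactCorrespondence C) {η : ℕ → α → ℝ}
    (hη : ∀ n, Continuous (η n)) : IsCompactCorrespondence fun y => lexVmax η (C y) :=
  .iInter (hC.iterVmax hη) fun y => antitone_iterVmax η (C y)

theorem exists_measurable_eq_singleton (hC : IsCompactCorrespondence C)
    (hsub : ∀ y, (C y).Subsingleton) :
    ∃ R : Y → α, (∀ U, IsOpen U → MeasurableSet (R ⁻¹' U)) ∧ ∀ y, C y = {R y} := by
  choose R hR using hC.nonempty
  have hsing (y : Y) : C y = {R y} := (hsub y).eq_singleton_of_mem (hR y)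
  refine ⟨R, fun U hU => .of_compl ?_, hsing⟩
  simpa only [hsing, singleton_inter_nonempty] using!
    hC.measurableSet_inter_nonempty Uᶜ hU.isClosed_compl

theorem exists_measurable_selection [T2Space α] (hC : IsCompactCorrespondence C)
    {η : ℕ → α → ℝ} (hη : ∀ n, Continuous (η n))
    (hsep : ∀ a b, (∀ n, η n a = η n b) → a = b) :
    ∃ R : Y → α, (∀ U, IsOpen U → MeasurableSet (R ⁻¹' U)) ∧ ∀ y, R y ∈ C y := by
  obtain ⟨R, hmeas, hR⟩ := (hC.lexVmax hη).exists_measurable_eq_singleton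
    fun y a ha b hb => hsep a b (eq_of_mem_lexVmax ha hb)
  exact ⟨R, hmeas, fun y => lexVmax_subset (hR y ▸ mem_singleton (R y))⟩

end IsCompactCorrespondence

end Correspondence

/-! ### Laws on the path space and support functions -/

-- Mathlib's σ-algebra on `ProbabilityMeasure E` is generated by the evaluations on measurable
-- sets, so measurability for the weak topology is expressed through preimages of open sets.
lemma measurable_toMeasure_of_isOpen {Y E : Type*} [MeasurableSpace Y] [TopologicalSpace E]
    [HasOuterApproxClosed E] [MeasurableSpace E] [BorelSpace E] {R : Y → ProbabilityMeasure E}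
    (hR : ∀ U, IsOpen U → MeasurableSet (R ⁻¹' U)) :
    Measurable fun y => (R y : Measure E) := by
  refine Measurable.measure_of_isPiSystem_of_isProbabilityMeasure
    (S := {B | IsClosed B}) ?_ isPiSystem_isClosed fun B (hB : IsClosed B) => ?_
  · rw [BorelSpace.measurable_eq (α := E), borel_eq_generateFrom_isClosed]
  · refine measurable_of_tendsto_metrizable (fun n => ?_) (tendsto_pi_nhds.2 fun y =>
      HasOuterApproxClosed.tendsto_lintegral_apprSeq hB (R y : Measure E))
    exact measurable_of_isOpen fun U hU => hR _ (hU.preimage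
      (ProbabilityMeasure.continuous_lintegral_boundedContinuousFunction _))

section Laws

instance [PolishSpace X] : PolishSpace (IPath X) :=
  let _ := TopologicalSpace.upgradeIsCompletelyMetrizable X
  inferInstance

variable {f : IPath X →ᵇ ℝ} {P : ProbabilityMeasure (IPath X)}

lemma continuous_intBCF (f : IPath X →ᵇ ℝ) : Continuous (intBCF f) :=
  ProbabilityMeasure.continuous_integral_boundedContinuousFunction f

lemma abs_intBCF_le (f : IPath X →ᵇ ℝ) (P : ProbabilityMeasure (IPath X)) :
    |intBCF f P| ≤ ‖f‖ :=
  f.norm_integral_le_norm (P : Measure (IPath X))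

lemma intBCF_neg (f : IPath X →ᵇ ℝ) (P : ProbabilityMeasure (IPath X)) :
    intBCF (-f) P = -intBCF f P :=
  integral_neg f

lemma intBCF_add_smul (f F : IPath X →ᵇ ℝ) (c : ℝ) (P : ProbabilityMeasure (IPath X)) :
    intBCF (f + c • F) P = intBCF f P + c * intBCF F P := by
  simp only [intBCF, BoundedContinuousFunction.coe_add, BoundedContinuousFunction.coe_smul,
    Pi.add_apply, smul_eq_mul]
  rw [integral_add (f.integrable _) ((F.integrable _).const_mul c), integral_const_mul]

/-- The composition `f ∘ θ_s` of a path functional with the shift. -/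
def compShift (s : ℝ≥0) (f : IPath X →ᵇ ℝ) : IPath X →ᵇ ℝ :=
  f.compContinuous ⟨shift s, shift_continuous s⟩

lemma intBCF_pshift (f : IPath X →ᵇ ℝ) (s : ℝ≥0) (P : ProbabilityMeasure (IPath X)) :
    intBCF f (pshift s P) = intBCF (compShift s f) P :=
  integral_map (shift_continuous s).measurable.aemeasurable f.continuous.aestronglyMeasurable

lemma hSupp_eq_intBCF {C : X → Set (ProbabilityMeasure (IPath X))} {x : X} (hP : P ∈ C x)
    (hconst : ∀ Q ∈ C x, intBCF f Q = intBCF f P) : hSupp C x f = intBCF f P := by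
  rw [hSupp, image_congr hconst, Set.Nonempty.image_const ⟨P, hP⟩, csSup_singleton]

namespace IsCompactCorrespondence

variable [MeasurableSpace X] {C D : X → Set (ProbabilityMeasure (IPath X))} {x : X}

lemma le_hSupp (hC : IsCompactCorrespondence C) (hP : P ∈ C x) : intBCF f P ≤ hSupp C x f :=
  le_csSup ((hC.isCompact x).bddAbove_image (continuous_intBCF f).continuousOn)
    (mem_image_of_mem _ hP)

lemma exists_hSupp_eq_intBCF (hC : IsCompactCorrespondence C) (x : X) (f : IPath X →ᵇ ℝ) :
    ∃ P ∈ C x, hSupp C x f = intBCF f P :=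
  (hC.isCompact x).exists_sSup_image_eq (hC.nonempty x) (continuous_intBCF f).continuousOn

lemma abs_hSupp_le (hC : IsCompactCorrespondence C) (x : X) (f : IPath X →ᵇ ℝ) :
    |hSupp C x f| ≤ ‖f‖ := by
  obtain ⟨P, -, hP⟩ := hC.exists_hSupp_eq_intBCF x f
  exact hP ▸ abs_intBCF_le f P

lemma hSupp_mono (hC : IsCompactCorrespondence C) (hD : IsCompactCorrespondence D)
    (hsub : D x ⊆ C x) : hSupp D x f ≤ hSupp C x f := by
  obtain ⟨P, hP, hmax⟩ := hD.exists_hSupp_eq_intBCF x f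
  exact hmax ▸ hC.le_hSupp (hsub hP)

lemma measurable_hSupp (hC : IsCompactCorrespondence C) (f : IPath X →ᵇ ℝ) :
    Measurable fun x => hSupp C x f :=
  hC.measurable_sSup_image (continuous_intBCF f)

lemma integrable_hSupp [BorelSpace X] (hC : IsCompactCorrespondence C) (f : IPath X →ᵇ ℝ)
    (s : ℝ≥0) (P : ProbabilityMeasure (IPath X)) :
    Integrable (fun w : IPath X => hSupp C (w s) f) (P : Measure (IPath X)) :=
  .of_bound ((hC.measurable_hSupp f).comp (continuous_eval_const s).measurable).aestronglyMeasurable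
    ‖f‖ (ae_of_all _ fun w => hC.abs_hSupp_le (w s) f)

lemma hSupp_Vmax_self (hC : IsCompactCorrespondence C) (F : IPath X →ᵇ ℝ) (x : X) :
    hSupp (fun y => _root_.Vmax (intBCF F) (C y)) x F = hSupp C x F := by
  obtain ⟨P, hP, hmax⟩ := (hC.Vmax (continuous_intBCF F)).exists_hSupp_eq_intBCF x F
  rw [hmax]
  exact ((mem_Vmax_iff ((hC.isCompact x).bddAbove_image
    (continuous_intBCF F).continuousOn)).1 hP).2

lemma tendsto_hSupp_add_smul (hC : IsCompactCorrespondence C) (f F : IPath X →ᵇ ℝ) (x : X) :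
    Tendsto (fun n : ℕ => hSupp C x (f + (n : ℝ) • F) - n * hSupp C x F) atTop
      (𝓝 (hSupp (fun y => _root_.Vmax (intBCF F) (C y)) x f)) := by
  simpa only [← intBCF_add_smul] using! tendsto_sSup_image_add_mul (hC.isCompact x)
    (hC.nonempty x) (continuous_intBCF f) (continuous_intBCF F)

lemma abs_hSupp_add_smul_sub_le (hC : IsCompactCorrespondence C) (f F : IPath X →ᵇ ℝ) (x : X)
    (n : ℕ) : |hSupp C x (f + (n : ℝ) • F) - n * hSupp C x F| ≤ ‖f‖ := by
  have hlower := sSup_image_Vmax_le (hC.isCompact x) (hC.nonempty x) (continuous_intBCF f)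
    (continuous_intBCF F) n
  have hupper := sSup_image_add_mul_sub_le (hC.isCompact x) (hC.nonempty x)
    (continuous_intBCF f) (continuous_intBCF F) n
  simp only [← intBCF_add_smul] at hlower hupper
  exact abs_le.2
    ⟨(abs_le.1 ((hC.Vmax (continuous_intBCF F)).abs_hSupp_le x f)).1.trans hlower,
      hupper.trans (abs_le.1 (hC.abs_hSupp_le x f)).2⟩

end IsCompactCorrespondence

end Laws

/-! ### The sets `K(P, s, 𝒞)` -/

section Kset

variable {C D : X → Set (ProbabilityMeasure (IPath X))} {P Q : ProbabilityMeasure (IPath X)}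
  {s : ℝ≥0}

/-- The integral of `G` takes a single value on each set of laws `D x`: the sense in which
successive maximization narrows these sets down to single laws. -/
def IntegralDetermined (D : X → Set (ProbabilityMeasure (IPath X))) (G : IPath X →ᵇ ℝ) : Prop :=
  ∀ x, ∀ R ∈ D x, ∀ R' ∈ D x, intBCF G R = intBCF G R'

-- Test the defining inequality of `Kset` with both `G` and `-G`.
lemma intBCF_eq_integral_hSupp (hne : ∀ x, (D x).Nonempty) (hQ : Q ∈ Kset D P s)
    {G : IPath X →ᵇ ℝ} (hG : IntegralDetermined D G) :
    intBCF G Q = ∫ w, hSupp D (w s) G ∂(P : Measure (IPath X)) := by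
  have hSupp_neg (x : X) : hSupp D x (-G) = -hSupp D x G := by
    obtain ⟨R, hR⟩ := hne x
    rw [hSupp_eq_intBCF hR fun Q hQ => hG x Q hQ R hR, ← intBCF_neg]
    exact hSupp_eq_intBCF hR fun Q hQ => by rw [intBCF_neg, intBCF_neg, hG x Q hQ R hR]
  have hge := hQ (-G)
  simp only [hSupp_neg, intBCF_neg, integral_neg] at hge
  exact le_antisymm (hQ G) (neg_le_neg_iff.1 hge)

variable [MeasurableSpace X]

lemma intBCF_eq_integral_hSupp_of_mem_Kset_Vmax (hC : IsCompactCorrespondence C)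
    {F : IPath X →ᵇ ℝ} (hQ : Q ∈ Kset (fun x => Vmax (intBCF F) (C x)) P s) :
    intBCF F Q = ∫ w, hSupp C (w s) F ∂(P : Measure (IPath X)) := by
  simpa only [hC.hSupp_Vmax_self] using intBCF_eq_integral_hSupp
    (hC.Vmax (continuous_intBCF F)).nonempty hQ
    fun x R hR R' hR' => le_antisymm (hR'.2 R hR.1) (hR.2 R' hR'.1)

variable [BorelSpace X]

section Mixture

variable [PolishSpace X] {R : X → ProbabilityMeasure (IPath X)}

lemma measurable_toMeasure_eval (hR : ∀ U, IsOpen U → MeasurableSet (R ⁻¹' U)) (s : ℝ≥0) :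
    Measurable fun w : IPath X => (R (w s) : Measure (IPath X)) :=
  (measurable_toMeasure_of_isOpen hR).comp (continuous_eval_const s).measurable

/-- The mixture `∫ R_{w(s)} P(dw)` of a measurable family of laws `R`. -/
def mixture (hR : ∀ U, IsOpen U → MeasurableSet (R ⁻¹' U))
    (P : ProbabilityMeasure (IPath X)) (s : ℝ≥0) : ProbabilityMeasure (IPath X) :=
  ⟨(P : Measure (IPath X)).bind fun w => (R (w s) : Measure (IPath X)),
    isProbabilityMeasure_bind (measurable_toMeasure_eval hR s).aemeasurable
      (ae_of_all _ fun w => (R (w s)).2)⟩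

lemma intBCF_mixture (hR : ∀ U, IsOpen U → MeasurableSet (R ⁻¹' U))
    (P : ProbabilityMeasure (IPath X)) (s : ℝ≥0) (f : IPath X →ᵇ ℝ) :
    intBCF f (mixture hR P s) = ∫ w, intBCF f (R (w s)) ∂(P : Measure (IPath X)) := by
  let κ : Kernel (IPath X) (IPath X) := ⟨_, measurable_toMeasure_eval hR s⟩
  have hcomp : (mixture hR P s : Measure (IPath X)) =
      (κ ∘ₖ Kernel.const Unit (P : Measure (IPath X))) () := rfl
  rw [intBCF, hcomp, Kernel.integral_comp (hcomp ▸ f.integrable _)]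
  rfl

lemma mixture_mem_Kset (hC : IsCompactCorrespondence C)
    (hR : ∀ U, IsOpen U → MeasurableSet (R ⁻¹' U)) (hRC : ∀ x, R x ∈ C x)
    (P : ProbabilityMeasure (IPath X)) (s : ℝ≥0) : mixture hR P s ∈ Kset C P s := by
  intro f
  have hmeas : Measurable fun x => intBCF f (R x) :=
    measurable_of_isOpen fun U hU => hR _ (hU.preimage (continuous_intBCF f))
  have hint : Integrable (fun w : IPath X => intBCF f (R (w s))) (P : Measure (IPath X)) :=
    .of_bound (hmeas.comp (continuous_eval_const s).measurable).aestronglyMeasurable ‖f‖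
      (ae_of_all _ fun w => abs_intBCF_le f _)
  rw [intBCF_mixture]
  exact integral_mono hint (hC.integrable_hSupp f s P) fun w => hC.le_hSupp (hRC (w s))

end Mixture

lemma Kset_nonempty [PolishSpace X] (hC : IsCompactCorrespondence C)
    (P : ProbabilityMeasure (IPath X)) (s : ℝ≥0) : (Kset C P s).Nonempty := by
  obtain ⟨F, hF⟩ := exists_seq_bcf_integral_separating (IPath X)
  obtain ⟨R, hR, hRC⟩ := hC.exists_measurable_selection (fun n => continuous_intBCF (F n)) hF
  exact ⟨_, mixture_mem_Kset hC hR hRC P s⟩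

lemma Kset_mono (hC : IsCompactCorrespondence C) (hD : IsCompactCorrespondence D)
    (hsub : ∀ x, D x ⊆ C x) (P : ProbabilityMeasure (IPath X)) (s : ℝ≥0) :
    Kset D P s ⊆ Kset C P s := fun _ hQ f =>
  (hQ f).trans <| integral_mono (hD.integrable_hSupp f s P) (hC.integrable_hSupp f s P)
    fun w => hC.hSupp_mono hD (hsub (w s))

lemma tendsto_integral_hSupp_add_smul (hC : IsCompactCorrespondence C) (f F : IPath X →ᵇ ℝ)
    (P : ProbabilityMeasure (IPath X)) (s : ℝ≥0) :
    Tendsto (fun n : ℕ => ∫ w, hSupp C (w s) (f + (n : ℝ) • F) ∂(P : Measure (IPath X)) -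
        n * ∫ w, hSupp C (w s) F ∂(P : Measure (IPath X))) atTop
      (𝓝 (∫ w, hSupp (fun x => Vmax (intBCF F) (C x)) (w s) f ∂(P : Measure (IPath X)))) := by
  have hint (n : ℕ) := (hC.integrable_hSupp F s P).const_mul (n : ℝ)
  simp only [← integral_const_mul, ← integral_sub (hC.integrable_hSupp _ s P) (hint _)]
  exact tendsto_integral_of_dominated_convergence (fun _ => ‖f‖)
    (fun n => ((hC.integrable_hSupp _ s P).sub (hint n)).aestronglyMeasurable)
    (integrable_const _) (fun n => ae_of_all _ fun w => hC.abs_hSupp_add_smul_sub_le f F (w s) n)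
    (ae_of_all _ fun w => hC.tendsto_hSupp_add_smul f F (w s))

theorem Vmax_Kset [PolishSpace X] (hC : IsCompactCorrespondence C) (F : IPath X →ᵇ ℝ)
    (P : ProbabilityMeasure (IPath X)) (s : ℝ≥0) :
    Vmax (intBCF F) (Kset C P s) = Kset (fun x => Vmax (intBCF F) (C x)) P s := by
  have hV := hC.Vmax (continuous_intBCF F)
  have hsub := Kset_mono hC hV (fun _ => Vmax_subset) P s
  refine Subset.antisymm (fun Q ⟨hQ, hmax⟩ f => ?_) fun Q hQ => ⟨hsub hQ, fun Q' hQ' => ?_⟩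
  · obtain ⟨Q', hQ'⟩ := Kset_nonempty hV P s
    have hQF : ∫ w, hSupp C (w s) F ∂(P : Measure (IPath X)) ≤ intBCF F Q :=
      (intBCF_eq_integral_hSupp_of_mem_Kset_Vmax hC hQ').symm.trans_le (hmax Q' (hsub hQ'))
    refine ge_of_tendsto' (tendsto_integral_hSupp_add_smul hC f F P s) fun n => ?_
    have hn := hQ (f + (n : ℝ) • F)
    rw [intBCF_add_smul] at hn
    linarith [mul_le_mul_of_nonneg_left hQF n.cast_nonneg]
  · rw [intBCF_eq_integral_hSupp_of_mem_Kset_Vmax hC hQ]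
    exact hQ' F

lemma mem_Kset_iInter {C : ℕ → X → Set (ProbabilityMeasure (IPath X))} [PolishSpace X]
    (hC : ∀ n, IsCompactCorrespondence (C n)) (hanti : ∀ x, Antitone fun n => C n x)
    (hQ : ∀ n, Q ∈ Kset (C n) P s) : Q ∈ Kset (fun x => ⋂ n, C n x) P s := by
  intro f
  refine ge_of_tendsto' (tendsto_integral_of_dominated_convergence (fun _ => ‖f‖)
    (fun n => ((hC n).integrable_hSupp f s P).aestronglyMeasurable) (integrable_const _)
    (fun n => ae_of_all _ fun w => (hC n).abs_hSupp_le (w s) f)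
    (ae_of_all _ fun w => ?_)) fun n => hQ n f
  exact tendsto_sSup_image_iInter (hanti (w s)) (fun n => (hC n).isCompact (w s))
    (fun n => (hC n).nonempty (w s)) (continuous_intBCF f)

end Kset

/-! ### The functionals `ζ` -/

section Zeta

variable {l : ℝ} {f : X →ᵇ ℝ}

/-- The path functional `w ↦ f(w(t))`. -/
def evalBCF (f : X →ᵇ ℝ) (t : ℝ≥0) : IPath X →ᵇ ℝ :=
  f.compContinuous ⟨fun w => w t, continuous_eval_const t⟩

lemma compShift_evalBCF (f : X →ᵇ ℝ) (s t : ℝ≥0) :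
    compShift s (evalBCF f t) = evalBCF f (s + t) :=
  rfl

lemma abs_intBCF_evalBCF_le (f : X →ᵇ ℝ) (P : ProbabilityMeasure (IPath X)) (t : ℝ≥0) :
    |intBCF (evalBCF f t) P| ≤ ‖f‖ :=
  (abs_intBCF_le _ P).trans <|
    (BoundedContinuousFunction.norm_le (norm_nonneg f)).2 fun w => f.norm_coe_le_norm (w t)

lemma continuous_intBCF_evalBCF (f : X →ᵇ ℝ) (P : ProbabilityMeasure (IPath X)) :
    Continuous fun t : ℝ => intBCF (evalBCF f t.toNNReal) P :=
  continuous_of_dominated (bound := fun _ => ‖f‖)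
    (fun _ => (evalBCF f _).continuous.aestronglyMeasurable)
    (fun _ => ae_of_all _ fun _ => f.norm_coe_le_norm _) (integrable_const _)
    (ae_of_all _ fun w => f.continuous.comp (w.continuous.comp continuous_real_toNNReal))

lemma zetaP_eq_zetaPtrunc_add (hl : 0 < l) (f : X →ᵇ ℝ) (s : ℝ≥0)
    (P : ProbabilityMeasure (IPath X)) :
    zetaP l f P = zetaPtrunc l f s P + Real.exp (-l * s) * zetaP l f (pshift s P) := by
  have hshift : zetaP l f (pshift s P) =
      laplace (fun t => intBCF (evalBCF f (t + s).toNNReal) P) l := by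
    refine setIntegral_congr_fun measurableSet_Ioi fun t (ht : 0 < t) => ?_
    have hadd : (t + s).toNNReal = s + t.toNNReal := by
      rw [Real.toNNReal_add ht.le s.coe_nonneg, Real.toNNReal_coe, add_comm]
    dsimp only
    rw [hadd, ← compShift_evalBCF, ← intBCF_pshift]
    rfl
  rw [hshift]
  exact laplace_eq_setIntegral_add (continuous_intBCF_evalBCF f P).measurable
    (fun t => abs_intBCF_evalBCF_le f P _) hl s.coe_nonneg

lemma norm_exp_neg_mul_bcf_le (l : ℝ) (f : X →ᵇ ℝ) (w : IPath X) (t : ℝ) :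
    ‖Real.exp (-l * t) * f (w t.toNNReal)‖ ≤ Real.exp (-l * t) * ‖f‖ := by
  rw [norm_mul, Real.norm_eq_abs, Real.abs_exp]
  exact mul_le_mul_of_nonneg_left (f.norm_coe_le_norm _) (Real.exp_pos _).le

/-- The path functional `w ↦ ∫₀^∞ e^{-lt} f(w(t)) dt`, whose mean under `P` is `ζ(P)`. -/
def zetaBCF [PolishSpace X] (hl : 0 < l) (f : X →ᵇ ℝ) : IPath X →ᵇ ℝ :=
  have hint := (exp_neg_integrableOn_Ioi 0 hl).mul_const ‖f‖
  .ofNormedAddCommGroup (fun w => laplace (fun t => f (w t.toNNReal)) l)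
    (continuous_of_dominated
      (fun _ => (by fun_prop : Continuous fun t : ℝ => _).aestronglyMeasurable)
      (fun w => ae_of_all _ (norm_exp_neg_mul_bcf_le l f w)) hint
      (ae_of_all _ fun t => continuous_const.mul (evalBCF f t.toNNReal).continuous))
    (∫ t in Ioi (0 : ℝ), Real.exp (-l * t) * ‖f‖)
    fun w => norm_integral_le_of_norm_le hint (ae_of_all _ (norm_exp_neg_mul_bcf_le l f w))

lemma zetaP_eq_intBCF_zetaBCF [PolishSpace X] (hl : 0 < l) (f : X →ᵇ ℝ) :
    zetaP l f = intBCF (zetaBCF hl f) := by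
  funext P
  have hint : Integrable (fun q : ℝ × IPath X => Real.exp (-l * q.1) * f (q.2 q.1.toNNReal))
      ((volume.restrict (Ioi 0)).prod (P : Measure (IPath X))) := by
    have hdom : Integrable (fun t => Real.exp (-l * t) * ‖f‖) (volume.restrict (Ioi 0)) :=
      (exp_neg_integrableOn_Ioi 0 hl).mul_const ‖f‖
    refine (hdom.comp_fst (P : Measure (IPath X))).mono' ?_
      (ae_of_all _ fun q => norm_exp_neg_mul_bcf_le l f q.2 q.1)
    exact (by fun_prop : Continuous fun q : ℝ × IPath X =>
      Real.exp (-l * q.1) * f (q.2 q.1.toNNReal)).aestronglyMeasurable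
  simp only [zetaP, ← integral_const_mul]
  exact integral_integral_swap hint

lemma continuous_zetaP [PolishSpace X] (hl : 0 < l) (f : X →ᵇ ℝ) :
    Continuous (zetaP (X := X) l f) :=
  zetaP_eq_intBCF_zetaBCF hl f ▸ continuous_intBCF _

lemma intBCF_evalBCF_eq_of_zetaP_eq {Λ : Set ℝ} (hpos : Λ ⊆ Ioi 0)
    (hdense : Ioi 0 ⊆ closure Λ) {P Q : ProbabilityMeasure (IPath X)}
    (h : ∀ l ∈ Λ, zetaP l f P = zetaP l f Q) {t : ℝ≥0} (ht : 0 < t) :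
    intBCF (evalBCF f t) P = intBCF (evalBCF f t) Q := by
  have heq := eqOn_of_laplace_eqOn (continuous_intBCF_evalBCF f P) (continuous_intBCF_evalBCF f Q)
    (fun t => abs_intBCF_evalBCF_le f P _) (fun t => abs_intBCF_evalBCF_le f Q _) hpos hdense h
  simpa only [Real.toNNReal_coe] using heq (NNReal.coe_pos.2 ht)

theorem map_eval_eq_of_zetaP_eq [PolishSpace X] [MeasurableSpace X] [BorelSpace X]
    {S : Submonoid (X →ᵇ ℝ)} (hS : Pairwise fun x y => ∃ f ∈ S, f x ≠ f y)
    {Λ : Set ℝ} (hpos : Λ ⊆ Ioi 0) (hdense : Ioi 0 ⊆ closure Λ)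
    {P Q : ProbabilityMeasure (IPath X)}
    (h : ∀ l ∈ Λ, ∀ f ∈ S, zetaP l f P = zetaP l f Q) {t : ℝ≥0} (ht : 0 < t) :
    (P : Measure (IPath X)).map (fun w => w t) = (Q : Measure (IPath X)).map (fun w => w t) := by
  have hev : AEMeasurable (fun w : IPath X => w t) (P : Measure (IPath X)) :=
    (continuous_eval_const t).measurable.aemeasurable
  have hev' : AEMeasurable (fun w : IPath X => w t) (Q : Measure (IPath X)) :=
    (continuous_eval_const t).measurable.aemeasurable
  refine measure_ext_of_submonoid_separating hS fun f hf => ?_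
  rw [integral_map hev f.continuous.aestronglyMeasurable,
    integral_map hev' f.continuous.aestronglyMeasurable]
  exact intBCF_evalBCF_eq_of_zetaP_eq hpos hdense (fun l hl => h l hl f hf) ht

end Zeta

/-! ### The Krylov property under maximization -/

section KrylovProperty

/-- Conditions (KP1) and (KP2) on a Krylov map. In (KP2) only the inclusion `⊇` is recorded, the
other one being part of the definition of `GammaSet`. -/
structure HasKrylovProperty (C : X → Set (ProbabilityMeasure (IPath X))) (lam : ℕ → ℝ)
    (phi : ℕ → X → ℝ) : Prop where
  pshift_mem_Kset : ∀ x, ∀ P ∈ C x, ∀ s : ℝ≥0, 0 < s → pshift s P ∈ Kset C P s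
  Kset_subset : ∀ x, ∀ P ∈ C x, ∀ s : ℝ≥0, 0 < s →
    Kset C P s ⊆ pshift s '' GammaSet C lam phi P x s

variable [PolishSpace X] [MeasurableSpace X] [BorelSpace X]
  {C : X → Set (ProbabilityMeasure (IPath X))} {lam : ℕ → ℝ} {phi : ℕ → X →ᵇ ℝ}

lemma Vmax_zetaP_Kset (hC : IsCompactCorrespondence C) {l : ℝ} (hl : 0 < l) (f : X →ᵇ ℝ)
    (P : ProbabilityMeasure (IPath X)) (s : ℝ≥0) :
    Vmax (zetaP l f) (Kset C P s) = Kset (fun x => Vmax (zetaP l f) (C x)) P s := by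
  rw [zetaP_eq_intBCF_zetaBCF hl, Vmax_Kset hC]

namespace HasKrylovProperty

-- By `zetaP_eq_zetaPtrunc_add`, `ζ` splits into the contribution of `[0, s]` and a positive
-- multiple of the value at the shifted law, and `GammaSet` controls the former.
protected theorem Vmax (hKP : HasKrylovProperty C lam fun n => phi n)
    (hC : IsCompactCorrespondence C) (hpos : ∀ n, 0 < lam n) (m : ℕ) :
    HasKrylovProperty (fun x => _root_.Vmax (zetaP (lam m) (phi m)) (C x)) lam
      fun n => phi n := by
  have hexp (s : ℝ≥0) : 0 < Real.exp (-lam m * s) := Real.exp_pos _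
  have pshift_mem (x : X) (P : ProbabilityMeasure (IPath X))
      (hP : P ∈ _root_.Vmax (zetaP (lam m) (phi m)) (C x)) (s : ℝ≥0) (hs : 0 < s) :
      pshift s P ∈ _root_.Vmax (zetaP (lam m) (phi m)) (Kset C P s) := by
    refine ⟨hKP.pshift_mem_Kset x P hP.1 s hs, fun Q' hQ' => ?_⟩
    obtain ⟨Q, ⟨hQC, -, htrunc⟩, rfl⟩ := hKP.Kset_subset x P hP.1 s hs hQ'
    have hle := hP.2 Q hQC
    rw [zetaP_eq_zetaPtrunc_add (hpos m) _ s P, zetaP_eq_zetaPtrunc_add (hpos m) _ s Q] at hle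
    exact le_of_mul_le_mul_left (by linarith [htrunc m]) (hexp s)
  refine ⟨fun x P hP s hs => ?_, fun x P hP s hs Q' hQ' => ?_⟩
  · rw [← Vmax_zetaP_Kset hC (hpos m)]
    exact pshift_mem x P hP s hs
  · rw [← Vmax_zetaP_Kset hC (hpos m)] at hQ'
    obtain ⟨Q, ⟨hQC, -, htrunc⟩, rfl⟩ := hKP.Kset_subset x P hP.1 s hs hQ'.1
    have hmax : zetaP (lam m) (phi m) P ≤ zetaP (lam m) (phi m) Q := by
      rw [zetaP_eq_zetaPtrunc_add (hpos m) _ s P, zetaP_eq_zetaPtrunc_add (hpos m) _ s Q]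
      exact add_le_add (htrunc m) (mul_le_mul_of_nonneg_left
        (hQ'.2 _ (hKP.pshift_mem_Kset x P hP.1 s hs)) (hexp s).le)
    exact ⟨Q, ⟨⟨hQC, fun R hR => (hP.2 R hR).trans hmax⟩,
      Vmax_zetaP_Kset hC (hpos m) _ P s ▸ hQ', htrunc⟩, rfl⟩

protected lemma iterVmax (hKP : HasKrylovProperty C lam fun n => phi n)
    (hC : IsCompactCorrespondence C) (hpos : ∀ n, 0 < lam n) :
    ∀ n, HasKrylovProperty (fun x => iterVmax (fun n => zetaP (lam n) (phi n)) (C x) n) lam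
      fun n => phi n
  | 0 => hKP
  | n + 1 => (hKP.iterVmax hC hpos n).Vmax
      (hC.iterVmax (fun n => continuous_zetaP (hpos n) (phi n)) n) hpos n

theorem pshift_mem_Kset_lexVmax (hKP : HasKrylovProperty C lam fun n => phi n)
    (hC : IsCompactCorrespondence C) (hpos : ∀ n, 0 < lam n) {x : X}
    {P : ProbabilityMeasure (IPath X)} (hP : P ∈ lexVmax (fun n => zetaP (lam n) (phi n)) (C x))
    {s : ℝ≥0} (hs : 0 < s) :
    pshift s P ∈ Kset (fun y => lexVmax (fun n => zetaP (lam n) (phi n)) (C y)) P s :=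
  mem_Kset_iInter (hC.iterVmax fun n => continuous_zetaP (hpos n) (phi n))
    (fun y => antitone_iterVmax _ (C y))
    fun n => (hKP.iterVmax hC hpos n).pshift_mem_Kset x P (mem_iInter.1 hP n) s hs

end HasKrylovProperty

end KrylovProperty

/-! ### Cylinder functionals and uniqueness -/

section Cylinder

/-- The path functional `w ↦ ∏ f(w(t))`, the product running over the pairs `(f, t)` in `L`. -/
def cylinderBCF (L : List ((X →ᵇ ℝ) × ℝ≥0)) : IPath X →ᵇ ℝ :=
  (L.map fun a => evalBCF a.1 a.2).prod

lemma cylinderBCF_cons (a : (X →ᵇ ℝ) × ℝ≥0) (L : List ((X →ᵇ ℝ) × ℝ≥0)) :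
    cylinderBCF (a :: L) = evalBCF a.1 a.2 * cylinderBCF L := by
  rw [cylinderBCF, List.map_cons, List.prod_cons, cylinderBCF]

lemma cylinderBCF_eq_compShift {s : ℝ≥0} {L : List ((X →ᵇ ℝ) × ℝ≥0)} (h : ∀ a ∈ L, s ≤ a.2) :
    cylinderBCF L = compShift s (cylinderBCF (L.map fun a => (a.1, a.2 - s))) := by
  induction L with
  | nil => rfl
  | cons a L ih =>
    obtain ⟨ha, hL⟩ := List.forall_mem_cons.1 h
    rw [List.map_cons, cylinderBCF_cons, cylinderBCF_cons, ih hL]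
    nth_rewrite 1 [← add_tsub_cancel_of_le ha]
    rfl

theorem probabilityMeasure_ext_of_cylinderBCF [PolishSpace X] {P Q : ProbabilityMeasure (IPath X)}
    (h : ∀ L, intBCF (cylinderBCF L) P = intBCF (cylinderBCF L) Q) : P = Q := by
  let S : Submonoid (IPath X →ᵇ ℝ) :=
    { carrier := range cylinderBCF
      one_mem' := ⟨[], rfl⟩
      mul_mem' := by
        rintro _ _ ⟨L, rfl⟩ ⟨L', rfl⟩
        exact ⟨L ++ L', by simp only [cylinderBCF, List.map_append, List.prod_append]⟩ }
  have hS : Pairwise fun w w' : IPath X => ∃ G ∈ S, G w ≠ G w' := by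
    intro w w' hne
    obtain ⟨t, ht⟩ := DFunLike.ne_iff.1 hne
    obtain ⟨F, hF⟩ := exists_seq_bcf_separating X
    obtain ⟨n, hn⟩ := hF ht
    exact ⟨cylinderBCF [(F n, t)], mem_range_self _, by simpa [cylinderBCF, evalBCF] using hn⟩
  refine Subtype.ext <| measure_ext_of_submonoid_separating
    (μ := (P : Measure (IPath X))) (ν := (Q : Measure (IPath X))) hS ?_
  rintro _ ⟨L, rfl⟩
  exact h L

lemma intBCF_evalBCF_zero_mul [T1Space X] {P : ProbabilityMeasure (IPath X)} {x : X}
    (hP : (P : Measure (IPath X)) {w : IPath X | w 0 = x} = 1) (f : X →ᵇ ℝ)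
    (G : IPath X →ᵇ ℝ) : intBCF (evalBCF f 0 * G) P = f x * intBCF G P := by
  have hmeas : MeasurableSet {w : IPath X | w 0 = x} :=
    (isClosed_singleton.preimage (continuous_eval_const (0 : ℝ≥0))).measurableSet
  have hstart : ∀ᵐ w ∂(P : Measure (IPath X)), w 0 = x := (prob_compl_eq_zero_iff hmeas).2 hP
  rw [intBCF, intBCF, ← integral_const_mul]
  refine integral_congr_ae ?_
  filter_upwards [hstart] with w hw
  simp [evalBCF, hw]

lemma exists_perm_cons_forall_le {α β : Type*} [LinearOrder β] (g : α → β) {L : List α}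
    (hL : L ≠ []) : ∃ a L', L.Perm (a :: L') ∧ ∀ b ∈ L', g a ≤ g b := by
  classical
  obtain ⟨a, ha, hmin⟩ := L.toFinset.exists_min_image g (L.toFinset_nonempty_iff.2 hL)
  exact ⟨a, L.erase a, List.perm_cons_erase (List.mem_toFinset.1 ha),
    fun b hb => hmin b (List.mem_toFinset.2 (List.mem_of_mem_erase hb))⟩

namespace IntegralDetermined

variable {D : X → Set (ProbabilityMeasure (IPath X))}

lemma evalBCF_zero_mul [T1Space X] {G : IPath X →ᵇ ℝ} (hG : IntegralDetermined D G)
    (hstart : ∀ x, ∀ P ∈ D x, (P : Measure (IPath X)) {w : IPath X | w 0 = x} = 1)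
    (f : X →ᵇ ℝ) : IntegralDetermined D (evalBCF f 0 * G) := fun x P hP Q hQ => by
  rw [intBCF_evalBCF_zero_mul (hstart x P hP), intBCF_evalBCF_zero_mul (hstart x Q hQ),
    hG x P hP Q hQ]

variable [MeasurableSpace X] [BorelSpace X]

protected lemma compShift {G : IPath X →ᵇ ℝ} (hG : IntegralDetermined D G)
    (hD : IsCompactCorrespondence D) {s : ℝ≥0}
    (hshift : ∀ x, ∀ P ∈ D x, pshift s P ∈ Kset D P s)
    (hmarg : ∀ x, ∀ P ∈ D x, ∀ Q ∈ D x,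
      (P : Measure (IPath X)).map (fun w => w s) = (Q : Measure (IPath X)).map (fun w => w s)) :
    IntegralDetermined D (compShift s G) := by
  intro x P hP Q hQ
  have integral_eq (R : ProbabilityMeasure (IPath X)) (hR : R ∈ D x) :
      intBCF (_root_.compShift s G) R =
        ∫ y, hSupp D y G ∂(R : Measure (IPath X)).map (fun w => w s) := by
    rw [← intBCF_pshift, intBCF_eq_integral_hSupp hD.nonempty (hshift x R hR) hG,
      integral_map (continuous_eval_const s).measurable.aemeasurable
        (hD.measurable_hSupp G).aestronglyMeasurable]
  rw [integral_eq P hP, integral_eq Q hQ, hmarg x P hP Q hQ]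

-- Shifting to the earliest time of the cylinder turns its first factor into a constant, which
-- leaves a shorter cylinder.
protected theorem cylinderBCF [T1Space X] (hD : IsCompactCorrespondence D)
    (hstart : ∀ x, ∀ P ∈ D x, (P : Measure (IPath X)) {w : IPath X | w 0 = x} = 1)
    (hshift : ∀ x, ∀ P ∈ D x, ∀ s : ℝ≥0, 0 < s → pshift s P ∈ Kset D P s)
    (hmarg : ∀ x, ∀ P ∈ D x, ∀ Q ∈ D x, ∀ s : ℝ≥0, 0 < s →
      (P : Measure (IPath X)).map (fun w => w s) = (Q : Measure (IPath X)).map (fun w => w s))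
    (L : List ((X →ᵇ ℝ) × ℝ≥0)) : IntegralDetermined D (cylinderBCF L) := by
  induction hk : L.length generalizing L with
  | zero =>
    obtain rfl := List.length_eq_zero_iff.1 hk
    exact fun x P _ Q _ => by simp [cylinderBCF, intBCF]
  | succ k ih =>
    obtain ⟨⟨f, s⟩, L', hperm, hmin⟩ := exists_perm_cons_forall_le (fun a => a.2)
      (List.ne_nil_of_length_eq_add_one hk)
    have hlen : L'.length = k := by simpa [hk, eq_comm] using hperm.length_eq
    have hcyl : cylinderBCF L = cylinderBCF ((f, s) :: L') :=
      (hperm.map _).prod_eq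
    rw [hcyl]
    rcases eq_zero_or_pos s with rfl | hs
    · exact cylinderBCF_cons (f, 0) L' ▸ (ih L' hlen).evalBCF_zero_mul hstart f
    · rw [cylinderBCF_eq_compShift (List.forall_mem_cons.2 ⟨le_rfl, hmin⟩), List.map_cons,
        cylinderBCF_cons, tsub_self]
      exact ((ih _ (by rw [List.length_map, hlen])).evalBCF_zero_mul hstart f).compShift hD
        (fun x P hP => hshift x P hP s hs) fun x P hP Q hQ => hmarg x P hP Q hQ s hs

end IntegralDetermined

end Cylinder

/-! ### Markov selections -/

section MarkovSelection

variable [PolishSpace X] [MeasurableSpace X] [BorelSpace X]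
  {C : X → Set (ProbabilityMeasure (IPath X))} {lam : ℕ → ℝ} {phi : ℕ → X →ᵇ ℝ}

lemma pshift_eq_mixture {R : X → ProbabilityMeasure (IPath X)}
    (hR : ∀ U, IsOpen U → MeasurableSet (R ⁻¹' U)) {P : ProbabilityMeasure (IPath X)} {s : ℝ≥0}
    (hP : pshift s P ∈ Kset (fun x => {R x}) P s) : pshift s P = mixture hR P s := by
  refine Subtype.ext <| ext_of_forall_integral_eq_of_IsFiniteMeasure
    (μ := (pshift s P : Measure (IPath X))) (ν := (mixture hR P s : Measure (IPath X))) fun f => ?_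
  have heq := intBCF_eq_integral_hSupp (fun x => singleton_nonempty (R x)) hP (G := f)
    fun x Q hQ Q' hQ' => by rw [eq_of_mem_singleton hQ, eq_of_mem_singleton hQ']
  simp only [hSupp, image_singleton, csSup_singleton] at heq
  exact heq.trans (intBCF_mixture hR P s f).symm

lemma map_eval_eq_of_forall_zetaP_eq (hpos : ∀ n, 0 < lam n)
    (hdense : Ioi 0 ⊆ closure (range lam)) (hsep : Pairwise fun x y => ∃ n, phi n x ≠ phi n y)
    (hmul : ∀ m n, ∃ k, phi k = phi m * phi n)
    (hprod : ∀ m n, ∃ k, lam k = lam m ∧ phi k = phi n) {P Q : ProbabilityMeasure (IPath X)}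
    (h : ∀ n, zetaP (lam n) (phi n) P = zetaP (lam n) (phi n) Q) {t : ℝ≥0} (ht : 0 < t) :
    (P : Measure (IPath X)).map (fun w => w t) = (Q : Measure (IPath X)).map (fun w => w t) := by
  let S : Submonoid (X →ᵇ ℝ) :=
    { carrier := insert 1 (range phi)
      one_mem' := mem_insert _ _
      mul_mem' := by
        rintro _ _ (rfl | ⟨m, rfl⟩) (rfl | ⟨n, rfl⟩)
        · exact .inl (one_mul 1)
        · exact .inr ⟨n, (one_mul _).symm⟩
        · exact .inr ⟨m, (mul_one _).symm⟩
        · exact .inr (hmul m n) }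
  have hS : Pairwise fun x y => ∃ f ∈ S, f x ≠ f y := fun x y hxy =>
    let ⟨n, hn⟩ := hsep hxy
    ⟨phi n, .inr ⟨n, rfl⟩, hn⟩
  refine map_eval_eq_of_zetaP_eq hS (range_subset_iff.2 hpos) hdense ?_ ht
  rintro _ ⟨m, rfl⟩ _ (rfl | ⟨n, rfl⟩)
  · simp [zetaP]
  · obtain ⟨k, hlam, hphi⟩ := hprod m n
    exact hlam ▸ hphi ▸ h k

lemma lexVmax_zetaP_subsingleton (hpos : ∀ n, 0 < lam n)
    (hdense : Ioi 0 ⊆ closure (range lam)) (hsep : Pairwise fun x y => ∃ n, phi n x ≠ phi n y)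
    (hmul : ∀ m n, ∃ k, phi k = phi m * phi n)
    (hprod : ∀ m n, ∃ k, lam k = lam m ∧ phi k = phi n) (hC : IsCompactCorrespondence C)
    (hstart : ∀ x, ∀ P ∈ C x, (P : Measure (IPath X)) {w : IPath X | w 0 = x} = 1)
    (hKP : HasKrylovProperty C lam fun n => phi n) (x : X) :
    (lexVmax (fun n => zetaP (lam n) (phi n)) (C x)).Subsingleton := by
  have hdet := IntegralDetermined.cylinderBCF
    (hC.lexVmax fun n => continuous_zetaP (hpos n) (phi n))
    (fun x P hP => hstart x P (lexVmax_subset hP))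
    (fun x P hP s hs => hKP.pshift_mem_Kset_lexVmax hC hpos hP hs)
    fun x P hP Q hQ s hs => map_eval_eq_of_forall_zetaP_eq hpos hdense hsep hmul hprod
      (eq_of_mem_lexVmax hP hQ) hs
  exact fun P hP Q hQ => probabilityMeasure_ext_of_cylinderBCF fun L => hdet L x P hP Q hQ

end MarkovSelection

theorem krylov_markov_selection_general
    {X : Type*} [TopologicalSpace X] [PolishSpace X] [MeasurableSpace X] [BorelSpace X]
    (lam : ℕ → ℝ) (phi : ℕ → X →ᵇ ℝ) (hpos : ∀ n, 0 < lam n)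
    (hdense : Ioi 0 ⊆ closure (range lam)) (hsep : Pairwise fun x y => ∃ n, phi n x ≠ phi n y)
    (hmul : ∀ m n, ∃ k, phi k = phi m * phi n)
    (hprod : ∀ m n, ∃ k, lam k = lam m ∧ phi k = phi n)
    (C : X → Set (ProbabilityMeasure (IPath X))) (hC : IsCompactCorrespondence C)
    (hstart : ∀ x, ∀ P ∈ C x, (P : Measure (IPath X)) {w : IPath X | w 0 = x} = 1)
    (hKP : HasKrylovProperty C lam fun n => phi n) :
    ∃ sel : X → ProbabilityMeasure (IPath X),
      (∀ U : Set (ProbabilityMeasure (IPath X)), IsOpen U → MeasurableSet (sel ⁻¹' U)) ∧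
      (∀ x, sel x ∈ C x) ∧
      ∀ x, ∀ s : ℝ≥0, 0 < s → ∀ B : Set (IPath X), MeasurableSet B →
        (pshift s (sel x) : Measure (IPath X)) B =
          ∫⁻ w, (sel (w s) : Measure (IPath X)) B ∂(sel x : Measure (IPath X)) := by
  obtain ⟨R, hmeas, hR⟩ := (hC.lexVmax fun n =>
    continuous_zetaP (hpos n) (phi n)).exists_measurable_eq_singleton
      (lexVmax_zetaP_subsingleton hpos hdense hsep hmul hprod hC hstart hKP)
  have hmem (x : X) : R x ∈ lexVmax (fun n => zetaP (lam n) (phi n)) (C x) :=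
    hR x ▸ mem_singleton (R x)
  refine ⟨R, hmeas, fun x => lexVmax_subset (hmem x), fun x s hs B hB => ?_⟩
  have hshift := hKP.pshift_mem_Kset_lexVmax hC hpos (hmem x) hs
  simp only [hR] at hshift
  rw [pshift_eq_mixture hmeas hshift]
  exact Measure.bind_apply hB (measurable_toMeasure_eval hmeas s).aemeasurable

namespace GoodData

variable {lam : ℕ → ℝ}

lemma exists_bcf {phi : ℕ → X → ℝ} (h : GoodData lam phi) :
    ∃ f : ℕ → X →ᵇ ℝ, (fun n => ⇑(f n)) = phi := by
  obtain ⟨-, -, hcont, hbdd, -⟩ := h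
  choose M hM using hbdd
  exact ⟨fun n => .ofNormedAddCommGroup (phi n) (hcont n) (M n) (hM n), rfl⟩

lemma pairwise_exists_ne [T1Space X] {phi : ℕ → X → ℝ} (h : GoodData lam phi) :
    Pairwise fun x y => ∃ n, phi n x ≠ phi n y := by
  obtain ⟨-, -, -, -, hsep, -⟩ := h
  intro x y hxy
  obtain ⟨n, ε, hε, hn⟩ := hsep x {y}ᶜ (isOpen_compl_singleton.mem_nhds hxy)
  refine ⟨n, fun heq => hε.not_ge ?_⟩
  simpa [heq] using hn y (notMem_compl_iff.2 rfl)

variable {phi : ℕ → X →ᵇ ℝ}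

lemma exists_eq_mul (h : GoodData lam fun n => phi n) (m n : ℕ) : ∃ k, phi k = phi m * phi n :=
  (h.2.2.2.2.2.1 m n).imp fun _ hk => DFunLike.coe_injective hk

lemma exists_eq_and_eq (h : GoodData lam fun n => phi n) (m n : ℕ) :
    ∃ k, lam k = lam m ∧ phi k = phi n :=
  (h.2.2.2.2.2.2 m n).imp fun _ hk => hk.imp_right fun hphi => DFunLike.coe_injective hphi

end GoodData

namespace IsKrylov

variable [MeasurableSpace X] {C : X → Set (ProbabilityMeasure (IPath X))} {lam : ℕ → ℝ}
  {phi : ℕ → X → ℝ}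

lemma isCompactCorrespondence (hK : IsKrylov C lam phi) : IsCompactCorrespondence C :=
  ⟨fun x => (hK.1 x).1, fun x => (hK.1 x).2.1, hK.2.1⟩

lemma hasKrylovProperty (hK : IsKrylov C lam phi) : HasKrylovProperty C lam phi :=
  ⟨hK.2.2.2.1, fun x P hP s hs => (hK.2.2.2.2 x P hP s hs).ge⟩

end IsKrylov

/-- **Abstract Markov selection theorem:** every Krylov set-valued map admits a Markov
selection, i.e., a measurable selection `x ↦ P_x ∈ 𝒞(x)` with
`θ_s P_x(·) = ∫ P_{w(s)}(·) P_x(dw)` for every `s > 0`. -/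
theorem krylov_markov_selection
    {X : Type*} [TopologicalSpace X] [PolishSpace X] [MeasurableSpace X] [BorelSpace X]
    (lam : ℕ → ℝ) (phi : ℕ → X → ℝ) (hdata : GoodData lam phi)
    (C : X → Set (ProbabilityMeasure (IPath X)))
    (hK : IsKrylov C lam phi) :
    ∃ sel : X → ProbabilityMeasure (IPath X),
      (∀ U : Set (ProbabilityMeasure (IPath X)), IsOpen U →
        MeasurableSet (sel ⁻¹' U)) ∧
      (∀ x, sel x ∈ C x) ∧
      ∀ x, ∀ s : ℝ≥0, 0 < s → ∀ B : Set (IPath X), MeasurableSet B →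
        (pshift s (sel x) : Measure (IPath X)) B =
          ∫⁻ w, (sel (w s) : Measure (IPath X)) B ∂(sel x : Measure (IPath X)) := by
  obtain ⟨f, rfl⟩ := hdata.exists_bcf
  exact krylov_markov_selection_general lam f hdata.1 hdata.2.1 hdata.pairwise_exists_ne
    hdata.exists_eq_mul hdata.exists_eq_and_eq C hK.isCompactCorrespondence hK.2.2.1
    hK.hasKrylovProperty
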